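/- Let a : ℤ² × ℤ² → ℝ be an elliptic matrix for the triangular lattice graph, and let L be the associated elliptic operator on functions u : ℤ² → ℂ. Then for every λ ∈ ℂ there is no nonzero finitely supported function u : ℤ² → ℂ with Lu = λu. (This is the case of the regular (3,6) tessellation, whose combinatorial curvature vanishes at every corner, in the paper's main theorem.) -/

import Mathlib

/-- The set of the six nearest-neighbour directions in the triangular lattice. -/
def triDirs : Finset (ℤ × ℤ) := {(1, 0), (-1, 0), (0, 1), (0, -1), (1, -1), (-1, 1)}

/-- Adjacency in the triangular lattice graph: `v ~ w` iff `w - v` is one of the six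
nearest-neighbour directions. -/
def triAdj (v w : ℤ × ℤ) : Prop := w - v ∈ triDirs

/-- The elliptic operator on the triangular lattice associated to the matrix `a`:
`(L u)(v) = a(v,v) u(v) + ∑_{w ~ v} a(v,w) u(w)`. -/
noncomputable def triL (a : (ℤ × ℤ) × (ℤ × ℤ) → ℝ) (u : ℤ × ℤ → ℂ) (v : ℤ × ℤ) : ℂ :=
  (a (v, v) : ℂ) * u v + ∑ d ∈ triDirs, (a (v, v + d) : ℂ) * u (v + d)

/-!
Fix a lattice direction `d`. Pairing with `d` in the hexagonal inner product is strictly larger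
at `d` than at `0` and at the five other directions. Let `p` minimise this pairing over the
support of a solution `u` of `L u = c u`. Among `p - d` and its six neighbours, `p` is then the
only vertex at which `u` can be nonzero, so the equation at `p - d` reads `a (p - d, p) * u p = 0`.
-/

theorem eq_zero_of_sum_mul_translate_eq_zero {G H R : Type*} [AddGroup G]
    [AddGroup H] [Preorder H] [AddLeftStrictMono H] [NonUnitalNonAssocSemiring R] [NoZeroDivisors R]
    (φ : G →+ H) {D : Finset G} {d : G} (hd : d ∈ D) (hmax : ∀ e ∈ D, e ≠ d → φ e < φ d)
    {b : G → G → R} (hb : ∀ v, b v d ≠ 0) {u : G → R} (hu : (φ '' Function.support u).IsWF)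
    (heq : ∀ v, ∑ e ∈ D, b v e * u (v + e) = 0) : u = 0 := by
  by_contra hne
  have hnonempty : (φ '' Function.support u).Nonempty :=
    (Function.support_nonempty_iff.mpr hne).image φ
  obtain ⟨p, hp, hp_min⟩ := hu.min_mem hnonempty
  have hzero : ∀ e ∈ D, e ≠ d → u (p - d + e) = 0 := by
    intro e he hed
    by_contra hue
    have hlt : φ (p - d + e) < φ p := by
      have : φ p + (-φ d + φ e) < φ p := by simpa using hmax e he hed
      simpa [sub_eq_add_neg, add_assoc] using this
    exact hu.not_lt_min hnonempty (Set.mem_image_of_mem φ hue) (hp_min ▸ hlt)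
  have hsum : ∑ e ∈ D, b (p - d) e * u (p - d + e) = b (p - d) d * u (p - d + d) :=
    Finset.sum_eq_single_of_mem d hd fun e he hed => by rw [hzero e he hed, mul_zero]
  rw [heq, sub_add_cancel] at hsum
  exact mul_ne_zero (hb _) hp hsum.symm

/-- The inner product with `d` on `ℤ × ℤ` embedded in the plane as the triangular lattice, scaled
so that it takes integer values and each of the six directions has squared length `2`. -/
def triInner (d : ℤ × ℤ) : ℤ × ℤ →+ ℤ :=
  AddMonoidHom.mk' (fun v => 2 * d.1 * v.1 + d.1 * v.2 + d.2 * v.1 + 2 * d.2 * v.2)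
    fun v w => by simp only [Prod.fst_add, Prod.snd_add]; ring

theorem triInner_lt_triInner_self :
    ∀ d ∈ triDirs, ∀ e ∈ insert 0 triDirs, e ≠ d → triInner d e < triInner d d := by
  decide

/-- The coefficient with which `u (v + e)` enters `(L u - c u) (v)`, for `e` a direction or `0`. -/
noncomputable def triCoeff (a : (ℤ × ℤ) × (ℤ × ℤ) → ℝ) (c : ℤ × ℤ → ℂ) (v e : ℤ × ℤ) : ℂ :=
  a (v, v + e) - if e = 0 then c v else 0

theorem triCoeff_zero (a : (ℤ × ℤ) × (ℤ × ℤ) → ℝ) (c : ℤ × ℤ → ℂ) (v : ℤ × ℤ) :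
    triCoeff a c v 0 = a (v, v) - c v := by
  simp [triCoeff]

theorem triCoeff_of_ne_zero (a : (ℤ × ℤ) × (ℤ × ℤ) → ℝ) (c : ℤ × ℤ → ℂ) (v : ℤ × ℤ) {e : ℤ × ℤ}
    (he : e ≠ 0) : triCoeff a c v e = a (v, v + e) := by
  simp [triCoeff, he]

theorem ne_zero_of_mem_triDirs {d : ℤ × ℤ} (hd : d ∈ triDirs) : d ≠ 0 :=
  ne_of_mem_of_not_mem hd (by decide)

theorem sum_triCoeff_mul_eq_triL_sub (a : (ℤ × ℤ) × (ℤ × ℤ) → ℝ) (c u : ℤ × ℤ → ℂ) (v : ℤ × ℤ) :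
    ∑ e ∈ insert 0 triDirs, triCoeff a c v e * u (v + e) = triL a u v - c v * u v := by
  have hsum : ∑ e ∈ triDirs, triCoeff a c v e * u (v + e) =
      ∑ e ∈ triDirs, (a (v, v + e) : ℂ) * u (v + e) :=
    Finset.sum_congr rfl fun e he => by
      rw [triCoeff_of_ne_zero a c v (ne_zero_of_mem_triDirs he)]
  rw [Finset.sum_insert (by decide), hsum, triCoeff_zero, add_zero, triL]
  ring

theorem triangular_lattice_no_compactly_supported_eigenfunction_general
    {a : (ℤ × ℤ) × (ℤ × ℤ) → ℝ} {d : ℤ × ℤ} (hd : d ∈ triDirs) (ha : ∀ v, a (v, v + d) ≠ 0)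
    {u c : ℤ × ℤ → ℂ} (hu : BddBelow (triInner d '' Function.support u))
    (heq : ∀ v, triL a u v = c v * u v) : u = 0 := by
  have hcoeff : ∀ v, triCoeff a c v d ≠ 0 := fun v => by
    rw [triCoeff_of_ne_zero a c v (ne_zero_of_mem_triDirs hd)]
    exact_mod_cast ha v
  have hsum : ∀ v, ∑ e ∈ insert 0 triDirs, triCoeff a c v e * u (v + e) = 0 := fun v => by
    rw [sum_triCoeff_mul_eq_triL_sub, heq, sub_self]
  exact eq_zero_of_sum_mul_translate_eq_zero (triInner d) (Finset.mem_insert_of_mem hd)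
    (triInner_lt_triInner_self d hd) hcoeff hu.isWF hsum

/-- No elliptic operator on the triangular lattice (the regular (3,6) tessellation) admits
a nonzero finitely supported eigenfunction. -/
theorem triangular_lattice_no_compactly_supported_eigenfunction
    (a : (ℤ × ℤ) × (ℤ × ℤ) → ℝ)
    (hell₁ : ∀ v w, triAdj v w → a (v, w) ≠ 0)
    (hell₂ : ∀ v w, v ≠ w → ¬ triAdj v w → a (v, w) = 0)
    (lam : ℂ) :
    ¬ ∃ u : ℤ × ℤ → ℂ, u ≠ 0 ∧ (Function.support u).Finite ∧
      ∀ v, triL a u v = lam * u v := by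
  rintro ⟨u, hu, hfin, heq⟩
  have ha : ∀ v, a (v, v + (1, 0)) ≠ 0 := fun v => hell₁ _ _ (by simp [triAdj, triDirs])
  exact hu (triangular_lattice_no_compactly_supported_eigenfunction_general
    (by decide) ha (hfin.image _).bddBelow heq)
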